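/- (Per-element norm equivalence for the discrete weak curl, Lemma 5.3 of the paper.) Let T ⊂ ℝ³ be a nonempty bounded open set whose boundary satisfies ∂T = ⋃_{i=1}^N cl(e_i), where, for affine maps l₁, …, l_N : ℝ³ → ℝ of the form l_i(x) = ⟨a_i, x⟩ + b_i with a_i ≠ 0 and with the hyperplanes l_i⁻¹(0) pairwise distinct, each face e_i is a nonempty relatively open subset of the hyperplane l_i⁻¹(0), μH²(cl(e_i) ∩ cl(e_j)) = 0 for i ≠ j, and μH²(∂T) < ∞; suppose further there exists M ∈ T with l_i(M) ≠ 0 for all i. Let n_i = a_i/|a_i| be the unit normal of the i-th face plane, let k ≥ 1 be an integer and let r ≥ max(2N + k − 1, k + 2(N−1)). Then there exist constants C₁, C₂ > 0, depending only on T, the faces, k and r, with the following property: for every polynomial vector field v₀ of degree at most k on ℝ³, every v_b : ∂T → ℝ³ that agrees on each face e_i with (the restriction of) a polynomial vector field of degree at most k, and every polynomial vector field W of degree at most r satisfying ∫_T W·q dx = ∫_T (∇×v₀)·q dx − ∫_{∂T} ((v_b − v₀)×n)·q dμH² for all polynomial vector fields q of degree at most r (where n = n_i on e_i), one has C₁ (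 ‖∇×v₀‖²_{L²(T)} + Σ_{i=1}^N ∫_{e_i} |(v_b − v₀)×n_i|² dμH² ) ≤ ‖W‖²_{L²(T)} ≤ C₂ ( ‖∇×v₀‖²_{L²(T)} + Σ_{i=1}^N ∫_{e_i} |(v_b − v₀)×n_i|² dμH² ). -/

import Mathlib

open MeasureTheory RealInnerProductSpace

/-- Euclidean 3-space. -/
abbrev E3 := EuclideanSpace ℝ (Fin 3)

/-- `f` is a polynomial function of total degree at most `k` on `ℝ³`. -/
def IsPolyFun3 (k : ℕ) (f : E3 → ℝ) : Prop :=
  ∃ P : MvPolynomial (Fin 3) ℝ, P.totalDegree ≤ k ∧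
    ∀ x : E3, f x = MvPolynomial.eval (fun i => x i) P

/-- `F` is a polynomial vector field of degree at most `k` on `ℝ³`. -/
def IsPolyVF (k : ℕ) (F : E3 → E3) : Prop :=
  ∀ i : Fin 3, IsPolyFun3 k (fun x => F x i)

/-- The curl `∇×F = (∂₂F₃ − ∂₃F₂, ∂₃F₁ − ∂₁F₃, ∂₁F₂ − ∂₂F₁)` of a vector field on `ℝ³`. -/
noncomputable def curl3 (F : E3 → E3) (x : E3) : E3 :=
  (WithLp.equiv 2 (Fin 3 → ℝ)).symm
    ![fderiv ℝ (fun y => F y 2) x (EuclideanSpace.single 1 (1 : ℝ)) -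
        fderiv ℝ (fun y => F y 1) x (EuclideanSpace.single 2 (1 : ℝ)),
      fderiv ℝ (fun y => F y 0) x (EuclideanSpace.single 2 (1 : ℝ)) -
        fderiv ℝ (fun y => F y 2) x (EuclideanSpace.single 0 (1 : ℝ)),
      fderiv ℝ (fun y => F y 1) x (EuclideanSpace.single 0 (1 : ℝ)) -
        fderiv ℝ (fun y => F y 0) x (EuclideanSpace.single 1 (1 : ℝ))]

/-- The cross product of vectors in `ℝ³`. -/
noncomputable def cross3 (u v : E3) : E3 :=
  (WithLp.equiv 2 (Fin 3 → ℝ)).symm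
    ![u 1 * v 2 - u 2 * v 1, u 2 * v 0 - u 0 * v 2, u 0 * v 1 - u 1 * v 0]


namespace WG

open MvPolynomial

theorem pderiv_deg (i : Fin 3) (P : MvPolynomial (Fin 3) ℝ) :
    (pderiv i P).totalDegree ≤ P.totalDegree - 1 := by
  conv_lhs => rw [P.as_sum, map_sum]
  apply totalDegree_finsetSum_le
  intro s hs
  rw [pderiv_monomial]
  by_cases h : s i = 0
  · simp [h]
  refine (totalDegree_monomial_le _ _).trans ?_
  have h1 := le_totalDegree hs
  have h2 : s - Finsupp.single i 1 + Finsupp.single i 1 = s := by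
    apply tsub_add_cancel_of_le
    rw [Finsupp.single_le_iff]; omega
  rw [← h2, Finsupp.sum_add_index' (by simp) (by simp)] at h1
  simp only [Finsupp.sum_single_index] at h1
  have h3 : ((s - Finsupp.single i 1).sum fun _ ↦ id) =
    ((s - Finsupp.single i 1).sum fun _ e ↦ e) := rfl
  omega

theorem hasFDeriv (P : MvPolynomial (Fin 3) ℝ) (x : E3) :
    DifferentiableAt ℝ (fun y : E3 => eval (fun i => y i) P) x ∧
    ∀ j, fderiv ℝ (fun y : E3 => eval (fun i => y i) P) x (EuclideanSpace.single j (1 : ℝ)) =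
      eval (fun i => x i) (pderiv j P) := by
  induction P using MvPolynomial.induction_on with
  | C a => simp
  | add p q hp hq =>
    simp only [map_add]
    refine ⟨hp.1.add hq.1, fun j => ?_⟩
    rw [fderiv_fun_add hp.1 hq.1]
    simp [hp.2, hq.2]
  | mul_X p n hp =>
    simp only [map_mul, eval_X]
    have hc : HasFDerivAt (fun y : E3 => y n) (EuclideanSpace.proj n : E3 →L[ℝ] ℝ) x :=
      (EuclideanSpace.proj n : E3 →L[ℝ] ℝ).hasFDerivAt
    refine ⟨hp.1.mul hc.differentiableAt, fun j => ?_⟩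
    rw [fderiv_fun_mul hp.1 hc.differentiableAt, hc.fderiv]
    simp [hp.2, Derivation.leibniz, pderiv_X, Pi.single_apply]
    split_ifs <;> simp

theorem comp_deg (k : ℕ) (P : MvPolynomial (Fin 3) ℝ) (hP : P.totalDegree ≤ k)
    (p : Fin 3 → MvPolynomial (Fin 3) ℝ) (hp : ∀ i, (p i).totalDegree ≤ 1) :
    (bind₁ p P).totalDegree ≤ k := by
  conv_lhs => rw [P.as_sum, map_sum]
  apply totalDegree_finsetSum_le
  intro s hs
  refine le_trans ?_ hP
  refine le_trans ?_ (le_totalDegree hs)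
  rw [bind₁_monomial]
  refine (totalDegree_mul _ _).trans ?_
  rw [totalDegree_C, zero_add]
  refine (totalDegree_finsetProd _ _).trans ?_
  apply Finset.sum_le_sum
  intro i _
  refine (totalDegree_pow _ _).trans ?_
  exact (Nat.mul_le_mul_left _ (hp i)).trans (by simp)

theorem eq_zero_of_open (P : MvPolynomial (Fin 3) ℝ) (U : Set E3) (hU : IsOpen U)
    (hne : U.Nonempty) (h : ∀ x ∈ U, eval (fun i => x i) P = 0) : P = 0 := by
  obtain ⟨x, hx⟩ := hne
  have h1 : (WithLp.toLp 2 : (Fin 3 → ℝ) → E3) ⁻¹' U ∈ nhds (fun i => x i) := by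
    apply (PiLp.continuous_toLp 2 (fun _ : Fin 3 => ℝ)).continuousAt
    exact hU.mem_nhds hx
  obtain ⟨ε, hε, hb⟩ := Metric.mem_nhds_iff.1 h1
  refine MvPolynomial.funext_set (fun i => Metric.ball (x i) ε) (fun i => ?_) (fun y hy => ?_)
  · rw [Real.ball_eq_Ioo]
    exact Set.Ioo_infinite (by linarith)
  · have : y ∈ Metric.ball (fun i => x i) ε := by
      rw [ball_pi _ hε]; exact hy
    have := h _ (hb this)
    simpa using this

theorem poly_cont {k : ℕ} {f : E3 → ℝ} (hf : IsPolyFun3 k f) : Continuous f := by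
  obtain ⟨P, -, h⟩ := hf
  have : f = fun x => eval (fun i => x i) P := funext h
  rw [this]
  exact continuous_iff_continuousAt.2 fun x => (hasFDeriv P x).1.continuousAt

theorem vf_cont {k : ℕ} {f : E3 → E3} (hf : IsPolyVF k f) : Continuous f := by
  have : f = fun x => WithLp.toLp 2 (fun i => f x i) := rfl
  rw [this]
  exact (PiLp.continuous_toLp 2 (fun _ : Fin 3 => ℝ)).comp
    (continuous_pi fun i => poly_cont (hf i))

theorem poly_add {k : ℕ} {f g : E3 → ℝ} (hf : IsPolyFun3 k f) (hg : IsPolyFun3 k g) :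
    IsPolyFun3 k (fun x => f x + g x) := by
  obtain ⟨P, hP, h⟩ := hf
  obtain ⟨Q, hQ, h'⟩ := hg
  exact ⟨P + Q, (totalDegree_add _ _).trans (max_le hP hQ), fun x => by simp [h, h']⟩

theorem poly_smul {k : ℕ} {f : E3 → ℝ} (c : ℝ) (hf : IsPolyFun3 k f) :
    IsPolyFun3 k (fun x => c * f x) := by
  obtain ⟨P, hP, h⟩ := hf
  exact ⟨c • P, (totalDegree_smul_le _ _).trans hP, fun x => by simp [h]⟩

theorem poly_sub {k : ℕ} {f g : E3 → ℝ} (hf : IsPolyFun3 k f) (hg : IsPolyFun3 k g) :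
    IsPolyFun3 k (fun x => f x - g x) := by
  have := poly_add hf (poly_smul (-1) hg)
  simpa [sub_eq_add_neg] using this

theorem poly_mul {k m n : ℕ} {f g : E3 → ℝ} (hf : IsPolyFun3 k f) (hg : IsPolyFun3 m g)
    (hn : k + m ≤ n) : IsPolyFun3 n (fun x => f x * g x) := by
  obtain ⟨P, hP, h⟩ := hf
  obtain ⟨Q, hQ, h'⟩ := hg
  exact ⟨P * Q, (totalDegree_mul _ _).trans (by omega), fun x => by simp [h, h']⟩

theorem poly_prod {ι : Type*} (s : Finset ι) (f : ι → E3 → ℝ) (hf : ∀ i, IsPolyFun3 1 (f i)) :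
    IsPolyFun3 s.card (fun x => ∏ i ∈ s, f i x) := by
  choose P hP h using hf
  refine ⟨∏ i ∈ s, P i, (totalDegree_finsetProd _ _).trans ?_, fun x => ?_⟩
  · exact (Finset.sum_le_sum fun i _ => hP i).trans (by simp)
  · simp [h]

theorem poly_prod_ne {ι : Type*} (s : Finset ι) (f : ι → E3 → ℝ) (k : ℕ)
    (hf : ∀ i, IsPolyFun3 k (f i)) (hne : ∀ i ∈ s, ∃ x, f i x ≠ 0) :
    ∃ x, ∏ i ∈ s, f i x ≠ 0 := by
  choose P hP h using hf
  by_contra! hcon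
  have h0 : ∏ i ∈ s, P i = 0 := eq_zero_of_open _ Set.univ isOpen_univ ⟨0, trivial⟩ fun x _ => by
    simpa [h, eval_prod] using hcon x
  obtain ⟨i, hi, h1⟩ := Finset.prod_eq_zero_iff.1 h0
  obtain ⟨x, hx⟩ := hne i hi
  exact hx (by simp [h, h1])

theorem poly_zero_of_mul {k m : ℕ} {f g : E3 → ℝ} (hf : IsPolyFun3 k f) (hg : IsPolyFun3 m g)
    (U : Set E3) (hU : IsOpen U) (hne : U.Nonempty) (hfne : ∃ x, f x ≠ 0)
    (h0 : ∀ x ∈ U, f x * g x = 0) (x : E3) : g x = 0 := by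
  obtain ⟨P, hP, h⟩ := hf
  obtain ⟨Q, hQ, h'⟩ := hg
  have : P * Q = 0 := eq_zero_of_open _ U hU hne fun x hx => by
    simpa [h, h'] using h0 x hx
  rcases mul_eq_zero.1 this with h1 | h1
  · obtain ⟨y, hy⟩ := hfne
    exact absurd (by simp [h, h1]) hy
  · simp [h', h1]

theorem poly_comp {k : ℕ} {f : E3 → ℝ} (hf : IsPolyFun3 k f) (p : E3 → E3) (hp : IsPolyVF 1 p) :
    IsPolyFun3 k (fun x => f (p x)) := by
  obtain ⟨P, hP, h⟩ := hf
  choose Q hQ h' using hp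
  refine ⟨bind₁ Q P, comp_deg k P hP Q hQ, fun x => ?_⟩
  have h2 := eval₂Hom_bind₁ (RingHom.id ℝ) (fun i => x i) Q P
  have h3 : (fun i => p x i) = fun i => eval (fun i => x i) (Q i) := _root_.funext fun i => h' i x
  change f (p x) = _
  rw [h, h3]
  exact h2.symm

theorem poly_affine (a : E3) (b : ℝ) : IsPolyFun3 1 (fun x => ⟪a, x⟫ + b) := by
  refine ⟨∑ i, C (a i) * X i + C b, ?_, fun x => ?_⟩
  · refine (totalDegree_add _ _).trans (max_le ?_ (by simp))
    apply totalDegree_finsetSum_le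
    intro i _
    exact (totalDegree_mul _ _).trans (by simp)
  · simp [PiLp.inner_apply, mul_comm]

theorem curl_poly {k : ℕ} {v : E3 → E3} (hv : IsPolyVF k v) : IsPolyVF (k - 1) (curl3 v) := by
  have key : ∀ i j, IsPolyFun3 (k - 1)
      (fun x => fderiv ℝ (fun y => v y i) x (EuclideanSpace.single j (1 : ℝ))) := by
    intro i j
    obtain ⟨P, hP, h⟩ := hv i
    refine ⟨pderiv j P, (pderiv_deg j P).trans (by omega), fun x => ?_⟩
    rw [← (hasFDeriv P x).2 j]
    have h2 : (fun y => v y i) = fun y : E3 => eval (fun i => y i) P := _root_.funext h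
    simp only [h2]
  intro i
  fin_cases i
  · exact poly_sub (key 2 1) (key 1 2)
  · exact poly_sub (key 0 2) (key 2 0)
  · exact poly_sub (key 1 0) (key 0 1)

theorem cross_poly {k : ℕ} {v : E3 → E3} (hv : IsPolyVF k v) (n : E3) :
    IsPolyVF k (fun x => cross3 (v x) n) := by
  have key : ∀ i j, IsPolyFun3 k (fun x => v x i * n j) := by
    intro i j
    simpa [mul_comm] using poly_smul (n j) (hv i)
  intro i
  fin_cases i
  · exact poly_sub (key 1 2) (key 2 1)
  · exact poly_sub (key 2 0) (key 0 2)
  · exact poly_sub (key 0 1) (key 1 0)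

/-- The space of polynomial vector fields of degree at most `k`. -/
def PV (k : ℕ) : Submodule ℝ (E3 → E3) where
  carrier := {f | IsPolyVF k f}
  add_mem' := fun ha hb i => poly_add (ha i) (hb i)
  zero_mem' := fun i => ⟨0, by simp, fun x => by simp⟩
  smul_mem' := fun c f hf i => poly_smul c (hf i)

theorem mem_PV {k : ℕ} {f : E3 → E3} : f ∈ PV k ↔ IsPolyVF k f := Iff.rfl

instance PV_fin (k : ℕ) : Module.Finite ℝ (PV k) := by
  let Φ : (Fin 3 → restrictTotalDegree (Fin 3) ℝ k) →ₗ[ℝ] PV k :=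
    { toFun := fun P => ⟨fun x => WithLp.toLp 2 fun i => eval (fun i => x i) (P i).1, fun i =>
        ⟨(P i).1, (mem_restrictTotalDegree _ _ _).1 (P i).2, fun x => rfl⟩⟩
      map_add' := fun P Q => by ext; simp
      map_smul' := fun P Q => by ext; simp }
  apply Module.Finite.of_surjective Φ
  rintro ⟨f, hf⟩
  have hf' := hf
  choose P hP h using hf'
  refine ⟨fun i => ⟨P i, (mem_restrictTotalDegree _ _ _).2 (hP i)⟩, ?_⟩
  ext x i
  exact (h i x).symm

theorem intOn {μ : Measure E3} {S : Set E3}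
    (hSm : MeasurableSet S) (hSb : Bornology.IsBounded S) (hS : μ S < ⊤) {f : E3 → ℝ}
    (hf : Continuous f) : IntegrableOn f S μ := by
  obtain ⟨C, hC⟩ := (hSb.isCompact_closure.image hf).isBounded.exists_norm_le
  refine Measure.integrableOn_of_bounded (M := C) hS.ne hf.aestronglyMeasurable ?_
  filter_upwards [ae_restrict_mem hSm] with x hx
  exact hC _ ⟨x, subset_closure hx, rfl⟩

theorem memL2 {μ : Measure E3} {S : Set E3}
    (hSm : MeasurableSet S) (hSb : Bornology.IsBounded S) (hS : μ S < ⊤) {f : E3 → E3}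
    (hf : Continuous f) : MemLp f 2 (μ.restrict S) := by
  rw [memLp_two_iff_integrable_sq_norm hf.aestronglyMeasurable]
  exact intOn hSm hSb hS (by fun_prop)

theorem norm_toLp {μ : Measure E3} {f : E3 → E3} (h : MemLp f 2 μ) :
    ‖h.toLp f‖ ^ 2 = ∫ x, ‖f x‖ ^ 2 ∂μ := by
  rw [← real_inner_self_eq_norm_sq, L2.inner_def]
  apply integral_congr_ae
  filter_upwards [h.coeFn_toLp] with x hx
  rw [hx, real_inner_self_eq_norm_sq]

theorem factor {V H K : Type*} [AddCommGroup V] [Module ℝ V] [Module.Finite ℝ V]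
    [NormedAddCommGroup H] [NormedSpace ℝ H] [NormedAddCommGroup K] [NormedSpace ℝ K]
    (A : V →ₗ[ℝ] H) (B : V →ₗ[ℝ] K) (h : ∀ v, A v = 0 → B v = 0) :
    ∃ C : ℝ, 0 < C ∧ ∀ v, ‖B v‖ ≤ C * ‖A v‖ := by
  obtain ⟨g, hg⟩ := A.rangeRestrict.exists_rightInverse_of_surjective A.range_rangeRestrict
  let L : LinearMap.range A →L[ℝ] K := LinearMap.toContinuousLinearMap (B ∘ₗ g)
  refine ⟨‖L‖ + 1, by positivity, fun v => ?_⟩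
  have h1 : B (g (A.rangeRestrict v)) = B v := by
    rw [← sub_eq_zero, ← map_sub]
    apply h
    rw [map_sub, sub_eq_zero]
    have := congrArg Subtype.val (LinearMap.congr_fun hg (A.rangeRestrict v))
    simpa using this
  have h2 := L.le_opNorm (A.rangeRestrict v)
  have h3 : L (A.rangeRestrict v) = B v := h1
  rw [h3] at h2
  refine h2.trans ?_
  have : ‖A.rangeRestrict v‖ = ‖A v‖ := rfl
  rw [this]
  nlinarith [norm_nonneg (A v)]

/-- The linear map into `L²(S)` induced by a linear family of continuous fields. -/
noncomputable def toL2 {V : Type*} [AddCommGroup V] [Module ℝ V] (A : V →ₗ[ℝ] (E3 → E3))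
    (μ : Measure E3) (hA : ∀ v, MemLp (A v) 2 μ) : V →ₗ[ℝ] Lp E3 2 μ where
  toFun v := (hA v).toLp
  map_add' v w := by
    rw [← MemLp.toLp_add]; simp only [map_add]
  map_smul' c v := by
    simp only [RingHom.id_apply]
    rw [← MemLp.toLp_const_smul]; simp only [map_smul]

theorem compare {V : Type*} [AddCommGroup V] [Module ℝ V] [Module.Finite ℝ V]
    (A B : V →ₗ[ℝ] (E3 → E3)) (hA : ∀ v, Continuous (A v)) (hB : ∀ v, Continuous (B v))
    {μ ν : Measure E3} {S R : Set E3}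
    (hSm : MeasurableSet S) (hSb : Bornology.IsBounded S) (hS : μ S < ⊤)
    (hRm : MeasurableSet R) (hRb : Bornology.IsBounded R) (hR : ν R < ⊤)
    (h : ∀ v, (∀ᵐ x ∂(μ.restrict S), A v x = 0) → ∀ x ∈ R, B v x = 0) :
    ∃ C : ℝ, 0 < C ∧ ∀ v, ∫ x in R, ‖B v x‖ ^ 2 ∂ν ≤ C * ∫ x in S, ‖A v x‖ ^ 2 ∂μ := by
  have mA := fun v => memL2 hSm hSb hS (hA v)
  have mB := fun v => memL2 hRm hRb hR (hB v)
  obtain ⟨C, hC, hle⟩ := factor (toL2 A _ mA) (toL2 B _ mB) (by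
    intro v hv
    have hv' : (mA v).toLp = 0 := hv
    change (mB v).toLp = 0
    rw [Lp.eq_zero_iff_ae_eq_zero] at hv' ⊢
    have := h v ((mA v).coeFn_toLp.symm.trans hv')
    refine (mB v).coeFn_toLp.trans ?_
    filter_upwards [ae_restrict_mem hRm] with x hx
    exact this x hx)
  refine ⟨C ^ 2, by positivity, fun v => ?_⟩
  rw [← norm_toLp (mA v), ← norm_toLp (mB v), ← mul_pow]
  exact pow_le_pow_left₀ (norm_nonneg _) (hle v) 2

/-- Nonempty relatively open subsets of a plane have positive `μH²`. -/
theorem plane_pos (a : E3) (ha : a ≠ 0) (b : ℝ) (U : Set E3) (hU : IsOpen U)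
    (hne : (U ∩ {x | ⟪a, x⟫ + b = 0}).Nonempty) : 0 < μH[2] (U ∩ {x | ⟪a, x⟫ + b = 0}) := by
  obtain ⟨x₀, hx₀, hx₁⟩ := hne
  let K : Submodule ℝ E3 := (Submodule.span ℝ {a})ᗮ
  have : Fact (Module.finrank ℝ E3 = 2 + 1) := ⟨by simp⟩
  have hK : Module.finrank ℝ K = 2 := Submodule.finrank_orthogonal_span_singleton ha
  have hH : Measure.IsAddHaarMeasure (G := K) μH[2] := by
    have := isAddHaarMeasure_hausdorffMeasure (E := K)
    rw [hK] at this
    exact_mod_cast this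
  let f : K → E3 := fun y => x₀ + (y : E3)
  have hf : Isometry f := (isometry_add_left x₀).comp isometry_subtype_coe
  have h1 : 0 < μH[2] (f ⁻¹' U) :=
    IsOpen.measure_pos _ (hU.preimage hf.continuous) ⟨0, by simpa [f] using hx₀⟩
  rw [← hf.hausdorffMeasure_image (Or.inl (by norm_num))] at h1
  refine h1.trans_le (measure_mono ?_)
  rintro _ ⟨y, hy, rfl⟩
  refine ⟨hy, ?_⟩
  have hy2 : ⟪a, (y : E3)⟫ = 0 := Submodule.mem_orthogonal_singleton_iff_inner_right.1 y.2
  simp only [Set.mem_ofPred_eq] at hx₁ ⊢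
  simp only [f, inner_add_right, hy2, add_zero]
  exact hx₁

theorem ae_zero_of_pos {μ : Measure E3} {S : Set E3} (hSm : MeasurableSet S)
    (hpos : ∀ U : Set E3, IsOpen U → (U ∩ S).Nonempty → 0 < μ (U ∩ S))
    {f : E3 → E3} (hf : Continuous f) (h : ∀ᵐ x ∂(μ.restrict S), f x = 0) :
    ∀ x ∈ S, f x = 0 := by
  intro x hx
  by_contra hne
  have ho : IsOpen {y | f y ≠ 0} := isOpen_ne_fun hf continuous_const
  have := hpos _ ho ⟨x, hne, hx⟩
  rw [ae_iff, Measure.restrict_apply' hSm] at h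
  exact this.ne' h

theorem cs {μ : Measure E3} {S : Set E3}
    (hSm : MeasurableSet S) (hSb : Bornology.IsBounded S) (hS : μ S < ⊤) {f g : E3 → E3}
    (hf : Continuous f) (hg : Continuous g) {t : ℝ} (ht : 0 < t) :
    2 * ∫ x in S, ⟪f x, g x⟫ ∂μ ≤ t * (∫ x in S, ‖f x‖ ^ 2 ∂μ) + t⁻¹ * ∫ x in S, ‖g x‖ ^ 2 ∂μ := by
  rw [← integral_const_mul, ← integral_const_mul, ← integral_const_mul, ← integral_add]
  · apply integral_mono
    · exact intOn hSm hSb hS (by fun_prop)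
    · exact intOn hSm hSb hS (by fun_prop)
    · intro x
      have h1 := real_inner_le_norm (f x) (g x)
      have h2 : 0 ≤ t⁻¹ * (t * ‖f x‖ - ‖g x‖) ^ 2 := by positivity
      have h3 : t⁻¹ * (t * ‖f x‖ - ‖g x‖) ^ 2 =
        t * ‖f x‖ ^ 2 - 2 * (‖f x‖ * ‖g x‖) + t⁻¹ * ‖g x‖ ^ 2 := by field_simp; ring
      dsimp only
      linarith
  · exact intOn hSm hSb hS (by fun_prop)
  · exact intOn hSm hSb hS (by fun_prop)

/-- The linear map `c ↦ φ • (c ∘ p)` on polynomial vector fields. -/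
def MM (k : ℕ) (φ : E3 → ℝ) (p : E3 → E3) : PV k →ₗ[ℝ] (E3 → E3) where
  toFun c := fun x => φ x • c.1 (p x)
  map_add' c d := by ext x i; simp
  map_smul' t c := by ext x i; simp; ring

theorem MM_cont {k : ℕ} {φ : E3 → ℝ} {p : E3 → E3} (hφ : Continuous φ) (hp : Continuous p)
    (c : PV k) : Continuous (MM k φ p c) :=
  hφ.smul ((vf_cont c.2).comp hp)

theorem bubble (k d : ℕ) (ψ : E3 → ℝ) (hψ : IsPolyFun3 d ψ) (p : E3 → E3) (hp : IsPolyVF 1 p)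
    (hpp : ∀ x, p (p x) = p x) {μ : Measure E3} {e U T : Set E3}
    (hU : IsOpen U) (heU : e = U ∩ {x | p x = x}) (hne : e.Nonempty)
    (hψne : ∃ x, ψ (p x) ≠ 0)
    (hpos : ∀ V : Set E3, IsOpen V → (V ∩ e).Nonempty → 0 < μ (V ∩ e))
    (hem : MeasurableSet e) (heb : Bornology.IsBounded e) (he : μ e < ⊤)
    (hTm : MeasurableSet T) (hTb : Bornology.IsBounded T) (hT : volume T < ⊤) :
    ∃ C : ℝ, 0 < C ∧ ∀ Q, IsPolyVF k Q → ∀ f : E3 → E3, Continuous f →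
      (∫ x in e, ⟪Q x, (ψ x ^ 2) • Q (p x)⟫ ∂μ = ∫ x in T, ⟪f x, (ψ x ^ 2) • Q (p x)⟫) →
      ∫ x in e, ‖Q x‖ ^ 2 ∂μ ≤ C * ∫ x in T, ‖f x‖ ^ 2 := by
  have cψ := poly_cont hψ
  have cp := vf_cont hp
  have ker : ∀ Q : PV k, (∀ᵐ x ∂(μ.restrict e), MM k ψ id Q x = 0) → ∀ x, Q.1 (p x) = 0 := by
    intro Q hQ x
    have h0 := ae_zero_of_pos hem hpos (MM_cont cψ continuous_id Q) hQ
    ext i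
    refine poly_zero_of_mul (poly_comp hψ p hp) (poly_comp (Q.2 i) p hp) (p ⁻¹' U)
      (hU.preimage cp) ?_ hψne ?_ x
    · obtain ⟨y, hy⟩ := hne
      rw [heU] at hy
      have h2 : p y = y := hy.2
      exact ⟨y, by rw [Set.mem_preimage, h2]; exact hy.1⟩
    · intro y hy
      have h1 := h0 (p y) (by rw [heU]; exact ⟨hy, hpp y⟩)
      have := congrArg (fun z : E3 => z i) h1
      simpa [MM] using this
  obtain ⟨C, hC, h1⟩ := compare (MM k ψ id) (MM k (fun x => ψ x ^ 2) p)
    (MM_cont cψ continuous_id) (MM_cont (by fun_prop) cp) hem heb he hTm hTb hT (by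
      intro Q hQ x _
      simp [MM, ker Q hQ x])
  obtain ⟨D, hD, h2⟩ := compare (MM k ψ id) (MM k (fun _ => 1) id)
    (MM_cont cψ continuous_id) (MM_cont continuous_const continuous_id) hem heb he hem heb he (by
      intro Q hQ x hx
      rw [heU] at hx
      have h3 : p x = x := hx.2
      have := ker Q hQ x
      rw [h3] at this
      simp [MM, this])
  refine ⟨D * C, by positivity, fun Q hQ f hf heq => ?_⟩
  have a1 := h1 ⟨Q, hQ⟩
  have a2 := h2 ⟨Q, hQ⟩
  have cQ := vf_cont hQ
  simp only [MM, LinearMap.coe_mk, AddHom.coe_mk, id, one_smul] at a1 a2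
  have a3 := cs hTm hTb hT hf (g := fun x => (ψ x ^ 2) • Q (p x)) (by fun_prop) hC
  have a4 : ∫ x in e, ⟪Q x, (ψ x ^ 2) • Q (p x)⟫ ∂μ = ∫ x in e, ‖ψ x • Q x‖ ^ 2 ∂μ := by
    apply setIntegral_congr_fun hem
    intro x hx
    rw [heU] at hx
    have h3 : p x = x := hx.2
    simp only [h3]
    rw [real_inner_smul_right, real_inner_self_eq_norm_sq, norm_smul, mul_pow, Real.norm_eq_abs,
      sq_abs]
  rw [← heq, a4] at a3
  have a5 := mul_le_mul_of_nonneg_left a1 (inv_pos.2 hC).le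
  rw [← mul_assoc, inv_mul_cancel₀ hC.ne', one_mul] at a5
  calc _ ≤ _ := a2
    _ ≤ D * (C * ∫ x in T, ‖f x‖ ^ 2) := mul_le_mul_of_nonneg_left (by linarith) hD.le
    _ = _ := by ring

/-- Orthogonal projection onto the plane `⟪a, x⟫ + b = 0`. -/
noncomputable def prj (a : E3) (b : ℝ) (x : E3) : E3 := x - ((⟪a, x⟫ + b) / ‖a‖ ^ 2) • a

theorem prj_poly (a : E3) (b : ℝ) : IsPolyVF 1 (prj a b) := by
  intro i
  have h1 : IsPolyFun3 1 (fun x : E3 => x i) := ⟨MvPolynomial.X i, by simp, fun x => by simp⟩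
  have h2 := poly_sub h1 (poly_smul (a i / ‖a‖ ^ 2) (poly_affine a b))
  have h3 : (fun x => prj a b x i) = fun x => x i - a i / ‖a‖ ^ 2 * (⟪a, x⟫ + b) := by
    funext x
    simp [prj]
    ring
  rw [h3]; exact h2

theorem prj_mem (a : E3) (ha : a ≠ 0) (b : ℝ) (x : E3) : ⟪a, prj a b x⟫ + b = 0 := by
  have : ‖a‖ ≠ 0 := norm_ne_zero_iff.2 ha
  rw [prj, inner_sub_right, real_inner_smul_right, real_inner_self_eq_norm_sq]
  field_simp
  ring

theorem prj_eq (a : E3) (ha : a ≠ 0) (b : ℝ) (x : E3) : prj a b x = x ↔ ⟪a, x⟫ + b = 0 := by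
  constructor
  · intro h
    rw [← h]; exact prj_mem a ha b x
  · intro h
    simp [prj, h]

theorem planes (a a' : E3) (b b' : ℝ) (ha : a ≠ 0) (ha' : a' ≠ 0)
    (h : ∀ x, ⟪a', prj a b x⟫ + b' = 0) (x : E3) : ⟪a', x⟫ + b' = 0 ↔ ⟪a, x⟫ + b = 0 := by
  have hn : ‖a‖ ≠ 0 := norm_ne_zero_iff.2 ha
  have key : ∀ x, ⟪a', x⟫ + b' = (⟪a', a⟫ / ‖a‖ ^ 2) * (⟪a, x⟫ + b) := by
    intro x
    have := h x
    rw [prj, inner_sub_right, real_inner_smul_right] at this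
    field_simp at this ⊢
    linarith
  have hc : ⟪a', a⟫ / ‖a‖ ^ 2 ≠ 0 := by
    intro h0
    have h1 := key 0
    have h2 := key a'
    rw [h0] at h1 h2
    rw [real_inner_self_eq_norm_sq] at h2
    simp at h1
    rw [h1] at h2
    simp at h2
    exact ha' h2
  rw [key, mul_eq_zero]
  tauto

end WG

/-- Per-element norm equivalence for the discrete weak curl (Lemma 5.3 of the paper):
on a (possibly non-convex) polyhedral element `T` with faces `e i` lying in the hyperplanes
`{l i = 0}` with unit normals `‖a i‖⁻¹ • a i`, the squared `L²(T)` norm of the discrete weak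
curl `W = ∇_{w,r,T}×{v₀, v_b}` is equivalent to
`‖∇×v₀‖²_{L²(T)} + Σᵢ ∫_{eᵢ} |(v_b − v₀)×nᵢ|² dμH²`. -/
theorem stmt12 (T : Set E3) (hTne : T.Nonempty) (hTo : IsOpen T)
    (hTb : Bornology.IsBounded T)
    (N : ℕ) (a : Fin N → E3) (b : Fin N → ℝ) (l : Fin N → E3 → ℝ)
    (hl : ∀ i x, l i x = ⟪a i, x⟫ + b i)
    (ha : ∀ i, a i ≠ 0)
    (hdistinct : ∀ i j, i ≠ j → (l i) ⁻¹' {0} ≠ (l j) ⁻¹' {0})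
    (e : Fin N → Set E3)
    (hene : ∀ i, (e i).Nonempty)
    (hesub : ∀ i, ∃ U : Set E3, IsOpen U ∧ e i = U ∩ (l i) ⁻¹' {0})
    (hbd : frontier T = ⋃ i, closure (e i))
    (hnull : ∀ i j, i ≠ j → μH[2] (closure (e i) ∩ closure (e j)) = 0)
    (hfin : μH[2] (frontier T) < ⊤)
    (M : E3) (hM : M ∈ T) (hlM : ∀ i, l i M ≠ 0)
    (k r : ℕ) (hk : 1 ≤ k) (hr : max (2 * N + k - 1) (k + 2 * (N - 1)) ≤ r) :
    ∃ C₁ : ℝ, 0 < C₁ ∧ ∃ C₂ : ℝ, 0 < C₂ ∧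
      ∀ v₀ : E3 → E3, IsPolyVF k v₀ →
      ∀ vb : E3 → E3, (∀ i, ∃ w : E3 → E3, IsPolyVF k w ∧ ∀ x ∈ e i, vb x = w x) →
      ∀ W : E3 → E3, IsPolyVF r W →
        (∀ q : E3 → E3, IsPolyVF r q →
          ∫ x in T, ⟪W x, q x⟫ =
            (∫ x in T, ⟪curl3 v₀ x, q x⟫) -
              ∑ i, ∫ x in e i, ⟪cross3 (vb x - v₀ x) (‖a i‖⁻¹ • a i), q x⟫ ∂μH[2]) →
        C₁ * ((∫ x in T, ‖curl3 v₀ x‖ ^ 2) +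
              ∑ i, ∫ x in e i, ‖cross3 (vb x - v₀ x) (‖a i‖⁻¹ • a i)‖ ^ 2 ∂μH[2]) ≤
            (∫ x in T, ‖W x‖ ^ 2) ∧
        (∫ x in T, ‖W x‖ ^ 2) ≤
          C₂ * ((∫ x in T, ‖curl3 v₀ x‖ ^ 2) +
              ∑ i, ∫ x in e i, ‖cross3 (vb x - v₀ x) (‖a i‖⁻¹ • a i)‖ ^ 2 ∂μH[2]) := by
  obtain rfl : l = fun i x => ⟪a i, x⟫ + b i := funext fun i => funext fun x => hl i x
  have hlp : ∀ i, IsPolyFun3 1 (fun x : E3 => ⟪a i, x⟫ + b i) := fun i => WG.poly_affine _ _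
  have hTm := hTo.measurableSet
  have hTv : volume T < ⊤ := hTb.measure_lt_top
  choose U hUo heU using hesub
  have heU' : ∀ i, e i = U i ∩ {x | ⟪a i, x⟫ + b i = 0} := heU
  have hem : ∀ i, MeasurableSet (e i) := fun i => by
    rw [heU']
    exact (hUo i).measurableSet.inter
      (isClosed_eq (WG.poly_cont (hlp i)) continuous_const).measurableSet
  have hef : ∀ i, e i ⊆ frontier T := fun i => by
    rw [hbd]
    exact subset_closure.trans (Set.subset_iUnion (fun i => closure (e i)) i)
  have heb : ∀ i, Bornology.IsBounded (e i) := fun i =>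
    hTb.closure.subset ((hef i).trans frontier_subset_closure)
  have hev : ∀ i, μH[2] (e i) < ⊤ := fun i => (measure_mono (hef i)).trans_lt hfin
  have hepos : ∀ i, ∀ V : Set E3, IsOpen V → (V ∩ e i).Nonempty → 0 < μH[2] (V ∩ e i) := by
    intro i V hV hne
    rw [heU', ← Set.inter_assoc] at hne ⊢
    exact WG.plane_pos _ (ha i) _ _ (hV.inter (hUo i)) hne
  have hTpos : ∀ V : Set E3, IsOpen V → (V ∩ T).Nonempty → 0 < volume (V ∩ T) :=
    fun V hV hne => (hV.inter hTo).measure_pos _ hne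
  -- element bubble
  obtain ⟨C0, hC0, hb0⟩ := WG.bubble (k - 1) N (fun x => ∏ i, (⟪a i, x⟫ + b i))
    (by simpa using WG.poly_prod Finset.univ _ hlp) id
    (fun i => ⟨MvPolynomial.X i, by simp, fun x => by simp⟩) (fun x => rfl)
    (μ := volume) (e := T) (U := T) (T := T) hTo (by ext; simp) hTne
    ⟨M, Finset.prod_ne_zero_iff.2 fun i _ => hlM i⟩ hTpos hTm hTb hTv hTm hTb hTv
  -- face bubbles
  have hface : ∀ κ, ∃ C : ℝ, 0 < C ∧ ∀ Q, IsPolyVF k Q → ∀ f : E3 → E3, Continuous f →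
      (∫ x in e κ, ⟪Q x, ((∏ i ∈ Finset.univ.erase κ, (⟪a i, x⟫ + b i)) ^ 2) •
          Q (WG.prj (a κ) (b κ) x)⟫ ∂μH[2] =
        ∫ x in T, ⟪f x, ((∏ i ∈ Finset.univ.erase κ, (⟪a i, x⟫ + b i)) ^ 2) •
          Q (WG.prj (a κ) (b κ) x)⟫) →
      ∫ x in e κ, ‖Q x‖ ^ 2 ∂μH[2] ≤ C * ∫ x in T, ‖f x‖ ^ 2 := by
    intro κ
    refine WG.bubble k (N - 1) (fun x => ∏ i ∈ Finset.univ.erase κ, (⟪a i, x⟫ + b i))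
      (by simpa using WG.poly_prod (Finset.univ.erase κ) _ hlp) (WG.prj (a κ) (b κ))
      (WG.prj_poly _ _) (fun x => (WG.prj_eq _ (ha κ) _ _).2 (WG.prj_mem _ (ha κ) _ _))
      (hUo κ) ?_ (hene κ) ?_ (hepos κ) (hem κ) (heb κ) (hev κ) hTm hTb hTv
    · simp only [WG.prj_eq _ (ha κ)]
      exact heU' κ
    · refine WG.poly_prod_ne (Finset.univ.erase κ)
        (fun i x => ⟪a i, WG.prj (a κ) (b κ) x⟫ + b i) 1
        (fun i => WG.poly_comp (hlp i) _ (WG.prj_poly _ _)) ?_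
      intro i hi
      by_contra! hcon
      apply hdistinct i κ (Finset.ne_of_mem_erase hi)
      ext x
      simpa using WG.planes (a κ) (a i) (b κ) (b i) (ha κ) (ha i) hcon x
  choose Cf hCf hbf using hface
  -- trace bounds
  have htrace : ∀ i, ∃ C : ℝ, 0 < C ∧ ∀ Q : WG.PV r,
      ∫ x in e i, ‖WG.MM r (fun _ => 1) id Q x‖ ^ 2 ∂μH[2] ≤
        C * ∫ x in T, ‖WG.MM r (fun _ => 1) id Q x‖ ^ 2 := by
    intro i
    refine WG.compare _ _ (WG.MM_cont continuous_const continuous_id)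
      (WG.MM_cont continuous_const continuous_id) hTm hTb hTv (hem i) (heb i) (hev i) ?_
    intro Q hQ x _
    have h0 := WG.ae_zero_of_pos hTm hTpos (WG.MM_cont continuous_const continuous_id Q) hQ
    have h1 : ∀ j, Q.1 x j = 0 := fun j => by
      refine WG.poly_zero_of_mul (f := fun _ => 1) (k := 0) ⟨1, by simp, fun x => by simp⟩ (Q.2 j)
        T hTo hTne ⟨0, one_ne_zero⟩ ?_ x
      intro y hy
      have := congrArg (fun z : E3 => z j) (h0 y hy)
      simpa [WG.MM] using this
    ext j
    simp [WG.MM, h1]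
  choose Ct hCt htr using htrace
  set D : ℝ := C0 + ∑ i, 2 * Cf i * (C0 + 1) with hD
  have hDpos : 0 < D := by
    have : 0 ≤ ∑ i, 2 * Cf i * (C0 + 1) := Finset.sum_nonneg fun i _ => by
      have := hCf i
      positivity
    linarith
  set B : ℝ := 1 + ∑ i, Ct i with hB
  have hB1 : 1 ≤ B := by
    have : 0 ≤ ∑ i, Ct i := Finset.sum_nonneg fun i _ => (hCt i).le
    linarith
  refine ⟨D⁻¹, inv_pos.2 hDpos, 2 * B, by positivity, ?_⟩
  intro v₀ hv₀ vb hvb W hW hweak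
  choose w hw hvw using hvb
  let g : Fin N → E3 → E3 := fun i x => cross3 (w i x - v₀ x) (‖a i‖⁻¹ • a i)
  have hg : ∀ i, IsPolyVF k (g i) := fun i =>
    WG.cross_poly (fun j => WG.poly_sub (hw i j) (hv₀ j)) _
  have hcurl := WG.curl_poly hv₀
  have cg : ∀ i, Continuous (g i) := fun i => WG.vf_cont (hg i)
  have cc := WG.vf_cont hcurl
  have cW := WG.vf_cont hW
  have r1 : ∀ i, ∫ x in e i, ‖cross3 (vb x - v₀ x) (‖a i‖⁻¹ • a i)‖ ^ 2 ∂μH[2] =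
      ∫ x in e i, ‖g i x‖ ^ 2 ∂μH[2] := fun i =>
    setIntegral_congr_fun (hem i) fun x hx => by simp only [g, hvw i x hx]
  have r2 : ∀ i (q : E3 → E3),
      ∫ x in e i, ⟪cross3 (vb x - v₀ x) (‖a i‖⁻¹ • a i), q x⟫ ∂μH[2] =
      ∫ x in e i, ⟪g i x, q x⟫ ∂μH[2] := fun i q =>
    setIntegral_congr_fun (hem i) fun x hx => by simp only [g, hvw i x hx]
  simp only [r2] at hweak
  simp only [r1]
  clear_value g
  set X := ∫ x in T, ‖W x‖ ^ 2 with hX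
  set Y := ∫ x in T, ‖curl3 v₀ x‖ ^ 2 with hY
  have hX0 : 0 ≤ X := integral_nonneg fun x => by positivity
  have hY0 : 0 ≤ Y := integral_nonneg fun x => by positivity
  have testpoly : ∀ (d m : ℕ) (ψ : E3 → ℝ) (Q : E3 → E3) (p : E3 → E3), IsPolyFun3 d ψ →
      IsPolyVF m Q → IsPolyVF 1 p → d + d + m ≤ r →
      IsPolyVF r (fun x => (ψ x ^ 2) • Q (p x)) := by
    intro d m ψ Q p h1 h2 h3 h4 i
    have h5 := WG.poly_mul (WG.poly_mul h1 h1 le_rfl) (WG.poly_comp (h2 i) p h3) h4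
    simpa [pow_two] using h5
  constructor
  · have hYX : Y ≤ C0 * X := by
      apply hb0 _ hcurl _ cW
      have h1 := hweak (fun x => ((∏ i, (⟪a i, x⟫ + b i)) ^ 2) • curl3 v₀ (id x))
        (testpoly N (k - 1) _ _ id (by simpa using WG.poly_prod Finset.univ _ hlp) hcurl
          (fun i => ⟨MvPolynomial.X i, by simp, fun x => by simp⟩) (by omega))
      rw [h1, Finset.sum_eq_zero, sub_zero]
      intro i _
      apply setIntegral_eq_zero_of_forall_eq_zero
      intro x hx
      have hx2 : ⟪a i, x⟫ + b i = 0 := by rw [heU'] at hx; exact hx.2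
      rw [Finset.prod_eq_zero (Finset.mem_univ i) hx2]
      simp
    have hG : ∀ κ, ∫ x in e κ, ‖g κ x‖ ^ 2 ∂μH[2] ≤ 2 * Cf κ * (C0 + 1) * X := by
      intro κ
      have hN : 0 < N := κ.pos
      let q : E3 → E3 := fun x => ((∏ i ∈ Finset.univ.erase κ, (⟪a i, x⟫ + b i)) ^ 2) •
          g κ (WG.prj (a κ) (b κ) x)
      have hq : IsPolyVF r q :=
        testpoly (N - 1) k _ _ _ (by simpa using WG.poly_prod (Finset.univ.erase κ) _ hlp) (hg κ)
          (WG.prj_poly _ _) (by omega)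
      have cq := WG.vf_cont hq
      have h1 := hweak q hq
      rw [Finset.sum_eq_single κ] at h1
      · have h2 := hbf κ _ (hg κ) (fun x => curl3 v₀ x - W x) (by fun_prop) (by
          change ∫ x in e κ, ⟪g κ x, q x⟫ ∂μH[2] = ∫ x in T, ⟪curl3 v₀ x - W x, q x⟫
          simp only [inner_sub_left]
          rw [integral_sub (WG.intOn hTm hTb hTv (by fun_prop)) (WG.intOn hTm hTb hTv (by fun_prop))]
          linarith)
        have h3 : ∫ x in T, ‖curl3 v₀ x - W x‖ ^ 2 ≤ 2 * (Y + X) := by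
          rw [hX, hY, ← integral_add (WG.intOn hTm hTb hTv (by fun_prop))
            (WG.intOn hTm hTb hTv (by fun_prop)), ← integral_const_mul]
          apply integral_mono (WG.intOn hTm hTb hTv (by fun_prop))
            (WG.intOn hTm hTb hTv (by fun_prop))
          intro x
          have := parallelogram_law_with_norm ℝ (curl3 v₀ x) (W x)
          have := sq_nonneg ‖curl3 v₀ x + W x‖
          dsimp only
          nlinarith
        calc _ ≤ _ := h2
          _ ≤ Cf κ * (2 * (C0 * X + X)) :=
            mul_le_mul_of_nonneg_left (by linarith) (hCf κ).le
          _ = _ := by ring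
      · intro i _ hi
        apply setIntegral_eq_zero_of_forall_eq_zero
        intro x hx
        have hx2 : ⟪a i, x⟫ + b i = 0 := by rw [heU'] at hx; exact hx.2
        have : q x = 0 := by
          simp only [q]
          rw [Finset.prod_eq_zero (Finset.mem_erase.2 ⟨hi, Finset.mem_univ i⟩) hx2]
          simp
        rw [this, inner_zero_right]
      · simp
    have hsum := Finset.sum_le_sum fun κ (_ : κ ∈ Finset.univ) => hG κ
    rw [← Finset.sum_mul] at hsum
    rw [inv_mul_le_iff₀ hDpos, hD]
    linarith
  · have h1 := hweak W hW
    simp only [real_inner_self_eq_norm_sq] at h1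
    have h2 := WG.cs hTm hTb hTv cc cW (t := 2) (by norm_num)
    have h3 : ∀ i, -(2 * ∫ x in e i, ⟪g i x, W x⟫ ∂μH[2]) ≤
        2 * B * (∫ x in e i, ‖g i x‖ ^ 2 ∂μH[2]) + (2 * B)⁻¹ * (Ct i * X) := by
      intro i
      have h4 := WG.cs (hem i) (heb i) (hev i) (f := fun x => - g i x) (by fun_prop) cW
        (t := 2 * B) (by positivity)
      simp only [inner_neg_left, integral_neg, norm_neg] at h4
      have h5 := htr i ⟨W, hW⟩
      simp only [WG.MM, LinearMap.coe_mk, AddHom.coe_mk, id, one_smul] at h5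
      have h6 := mul_le_mul_of_nonneg_left h5 (by positivity : 0 ≤ (2 * B)⁻¹)
      linarith
    have h4 := Finset.sum_le_sum fun i (_ : i ∈ Finset.univ) => h3 i
    rw [Finset.sum_neg_distrib, ← Finset.mul_sum, Finset.sum_add_distrib, ← Finset.mul_sum,
      ← Finset.mul_sum, ← Finset.sum_mul] at h4
    have h5 : (2 * B)⁻¹ * ((∑ i, Ct i) * X) ≤ 1 / 2 * X := by
      rw [← mul_assoc]
      apply mul_le_mul_of_nonneg_right _ hX0
      rw [inv_mul_le_iff₀ (by positivity)]
      linarith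
    have h6 : 1 * Y ≤ B * Y := mul_le_mul_of_nonneg_right hB1 hY0
    linarith
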